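/- With the policy-dependent IX parameters set to γ_π = √(log(2|Π|/δ)/(2·C_0(π)·n)) for each π ∈ Π, the coverage-scaled PIWO-IX output ĥπ_n = argmax_{π∈Π} ṽ†_n(π) satisfies, with probability at least 1-δ and simultaneously for every comparator π* ∈ Π, v(π*) - v(ĥπ_n) ≤ √(8·C_0(π*)·log(2|Π|/δ)/n). -/

import Mathlib

/-!
Write `L = log (2|Π|/δ)`, `γ = γ_π`, `Z = π(A|X) R / (μ(A|X) + γ)`, `C = C₀(π)`. Two exponential-moment
bounds for a single observation carry the argument, both with exponent `2γ`:

* `E exp (2γ Z) ≤ exp (2γ v(π))`, because `2x/(x+2) ≤ log (1+x)` gives the pointwise bound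
  `exp (2γ Z) ≤ 1 + 2γ π R / μ` (`exp_ix_le`);
* `E exp (-2γ Z) ≤ exp (-2γ v(π) + 4γ² C)`, because `exp (-x) ≤ 1 - x + x²/2` gives the pointwise
  bound `exp (-2γ Z) ≤ 1 - 2γ π R / μ + 4γ² π R / μ²` (`exp_neg_ix_le`).

Both pointwise bounds are affine in `R`, so `obs_mgf_le` turns them into expectations. Markov's
inequality for the i.i.d. sum (`dataLaw_tail`) and a union bound over the `2|Π|` events give, with
probability at least `1 - δ`, for all `π ∈ Π` at once,
`ṽ(π) - L/(2γn) ≤ v(π)` and `v(π) ≤ ṽ(π) + 2γC + L/(2γn)`.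
Maximality of the output then yields `v(π*) - v(π̂) ≤ 2γC + L/(γn)`, with `γ` and `C` those of `π*`,
and the chosen `γ` makes this equal to `√(8CL/n)`.
-/

open MeasureTheory ProbabilityTheory

/-- A stochastic contextual bandit instance: context distribution `ν`, behavior policy `μb`,
reward kernel `rker` supported on `[0,1]`, and mean reward function `r`. -/
structure CBSetup (𝓧 𝓐 : Type*) [MeasurableSpace 𝓧] [Fintype 𝓐] [MeasurableSpace 𝓐] where
  /-- the context distribution -/
  ν : Measure 𝓧
  ν_prob : IsProbabilityMeasure ν
  /-- the behavior policy `μ(a|x)` -/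
  μb : 𝓧 → 𝓐 → ℝ
  μb_nonneg : ∀ x a, 0 ≤ μb x a
  μb_sum_one : ∀ x, ∑ a, μb x a = 1
  μb_meas : ∀ a, Measurable fun x => μb x a
  /-- the reward kernel `p(·|x,a)` -/
  rker : 𝓧 → 𝓐 → Measure ℝ
  rker_prob : ∀ x a, IsProbabilityMeasure (rker x a)
  rker_supp : ∀ x a, rker x a (Set.Icc (0:ℝ) 1)ᶜ = 0
  rker_meas : ∀ a, Measurable fun x => rker x a
  /-- the mean reward `r(x,a)` -/
  r : 𝓧 → 𝓐 → ℝ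
  r_def : ∀ x a, r x a = ∫ ρ, ρ ∂(rker x a)
  r_meas : ∀ a, Measurable fun x => r x a

variable {𝓧 𝓐 : Type*} [MeasurableSpace 𝓧] [Fintype 𝓐] [MeasurableSpace 𝓐]
  [MeasurableSingletonClass 𝓐]

/-- The law of a single observation `(X, A, R)` with `X ~ ν`, `A ~ μ(·|X)`, `R ~ p(·|X,A)`. -/
noncomputable def obsLaw (S : CBSetup 𝓧 𝓐) : Measure (𝓧 × 𝓐 × ℝ) :=
  S.ν.bind fun x => Measure.sum fun a =>
    ENNReal.ofReal (S.μb x a) • (S.rker x a).map fun ρ => (x, a, ρ)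

/-- The law of the i.i.d. dataset `(X_t, A_t, R_t)_{t=1}^n`. -/
noncomputable def dataLaw (S : CBSetup 𝓧 𝓐) (n : ℕ) : Measure (Fin n → 𝓧 × 𝓐 × ℝ) :=
  Measure.pi fun _ : Fin n => obsLaw S

/-- A (stochastic, measurable) policy: a map from contexts to distributions over actions. -/
def IsPolicy (π : 𝓧 → 𝓐 → ℝ) : Prop :=
  (∀ x a, 0 ≤ π x a) ∧ (∀ x, ∑ a, π x a = 1) ∧ (∀ a, Measurable fun x => π x a)

/-- The value `v(π) = E[Σ_a π(a|X) r(X,a)]` of a policy. -/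
noncomputable def pval (S : CBSetup 𝓧 𝓐) (π : 𝓧 → 𝓐 → ℝ) : ℝ :=
  ∫ x, ∑ a, π x a * S.r x a ∂S.ν

/-- The smoothed coverage ratio `C_γ(π) = E[Σ_a π(a|X) r(X,a)/(μ(a|X)+γ)]`. -/
noncomputable def covγ (S : CBSetup 𝓧 𝓐) (γ : ℝ) (π : 𝓧 → 𝓐 → ℝ) : ℝ :=
  ∫ x, ∑ a, π x a * S.r x a / (S.μb x a + γ) ∂S.ν

/-- The IX reward estimate `r̃(π) = π(A|X) R / (μ(A|X) + γ)` for one observation `ω = (X,A,R)`. -/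
noncomputable def ixTerm (S : CBSetup 𝓧 𝓐) (γ : ℝ) (π : 𝓧 → 𝓐 → ℝ) (ω : 𝓧 × 𝓐 × ℝ) : ℝ :=
  π ω.1 ω.2.1 * ω.2.2 / (S.μb ω.1 ω.2.1 + γ)

/-- The IX value estimator `ṽ_n(π) = (1/n) Σ_t π(A_t|X_t) R_t / (μ(A_t|X_t) + γ)`. -/
noncomputable def ixEst (S : CBSetup 𝓧 𝓐) (γ : ℝ) {n : ℕ} (π : 𝓧 → 𝓐 → ℝ)
    (D : Fin n → 𝓧 × 𝓐 × ℝ) : ℝ :=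
  (∑ t, ixTerm S γ π (D t)) / n

set_option linter.unusedSectionVars false

/-! ### The law of one observation -/

lemma CBSetup.r_mem (S : CBSetup 𝓧 𝓐) (x : 𝓧) (a : 𝓐) : 0 ≤ S.r x a ∧ S.r x a ≤ 1 := by
  have := S.rker_prob x a
  have hae : ∀ᵐ ρ ∂(S.rker x a), ρ ∈ Set.Icc (0:ℝ) 1 := S.rker_supp x a
  rw [S.r_def]
  constructor
  · exact integral_nonneg_of_ae (hae.mono fun ρ h => h.1)
  · have h := integral_mono_of_nonneg (μ := S.rker x a) (f := fun ρ : ℝ => ρ)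
      (g := fun _ => (1:ℝ)) (hae.mono fun ρ h => h.1) (integrable_const _)
      (hae.mono fun ρ h => h.2)
    simpa using h

lemma CBSetup.integrable_id (S : CBSetup 𝓧 𝓐) (x : 𝓧) (a : 𝓐) :
    Integrable (fun ρ : ℝ => ρ) (S.rker x a) := by
  have := S.rker_prob x a
  have hae : ∀ᵐ ρ ∂(S.rker x a), ρ ∈ Set.Icc (0:ℝ) 1 := S.rker_supp x a
  exact Integrable.of_mem_Icc 0 1 aemeasurable_id hae

lemma obsKernel_measurable (S : CBSetup 𝓧 𝓐) :
    Measurable fun x => Measure.sum fun a =>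
      ENNReal.ofReal (S.μb x a) • (S.rker x a).map fun ρ => (x, a, ρ) := by
  refine Measure.measurable_of_measurable_coe _ fun s hs => ?_
  have hmk : ∀ (x : 𝓧) (a : 𝓐), Measurable fun ρ : ℝ => (x, a, ρ) := fun x a => by fun_prop
  simp only [Measure.sum_apply _ hs, Measure.smul_apply, smul_eq_mul, tsum_fintype]
  refine Finset.measurable_fun_sum _ fun a _ => ?_
  refine (S.μb_meas a).ennreal_ofReal.mul ?_
  let κ : Kernel 𝓧 ℝ := ⟨fun x => S.rker x a, S.rker_meas a⟩
  have hm : Measurable fun p : 𝓧 × ℝ => (p.1, a, p.2) := by fun_prop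
  have h := Kernel.measurable_kernel_prodMk_left_of_finite (κ := κ) (hm hs)
    (fun x => by have := S.rker_prob x a; exact inferInstanceAs (IsFiniteMeasure (S.rker x a)))
  convert h using 2 with x
  rw [Measure.map_apply (hmk x a) hs]
  rfl

lemma lintegral_obsLaw (S : CBSetup 𝓧 𝓐) {f : 𝓧 × 𝓐 × ℝ → ENNReal} (hf : Measurable f) :
    ∫⁻ ω, f ω ∂(obsLaw S) =
      ∫⁻ x, ∑ a, ENNReal.ofReal (S.μb x a) * ∫⁻ ρ, f (x, a, ρ) ∂(S.rker x a) ∂S.ν := by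
  rw [obsLaw, Measure.lintegral_bind (obsKernel_measurable S).aemeasurable hf.aemeasurable]
  refine lintegral_congr fun x => ?_
  rw [lintegral_sum_measure, tsum_fintype]
  refine Finset.sum_congr rfl fun a _ => ?_
  rw [lintegral_smul_measure, lintegral_map hf (by fun_prop), smul_eq_mul]

instance obsLaw_prob (S : CBSetup 𝓧 𝓐) : IsProbabilityMeasure (obsLaw S) := by
  constructor
  have := S.ν_prob
  rw [← lintegral_one, lintegral_obsLaw S measurable_const]
  have h : ∀ x, ∑ a, ENNReal.ofReal (S.μb x a) * ∫⁻ _, 1 ∂(S.rker x a) = 1 := fun x => by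
    have h1 : ∀ a, ∫⁻ _, 1 ∂(S.rker x a) = 1 := fun a => by
      have := S.rker_prob x a
      simp
    simp only [h1, mul_one]
    rw [← ENNReal.ofReal_sum_of_nonneg fun a _ => S.μb_nonneg x a, S.μb_sum_one,
      ENNReal.ofReal_one]
  rw [lintegral_congr h]
  simp

/-! ### Exponential moments and the Chernoff bound -/

/-- Exponential-moment bound for one observation: a pointwise bound `exp F ≤ 1 + R · h(X,A)`, affine
in the reward, passes to the expectation, where `1 + y ≤ exp y` applies. -/
lemma obs_mgf_le (S : CBSetup 𝓧 𝓐) {F : 𝓧 × 𝓐 × ℝ → ℝ} (hF : Measurable F) (h : 𝓧 → 𝓐 → ℝ)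
    (hb : ∀ x a, ∀ ρ ∈ Set.Icc (0:ℝ) 1, Real.exp (F (x, a, ρ)) ≤ 1 + ρ * h x a)
    (hint : Integrable (fun x => ∑ a, S.μb x a * (S.r x a * h x a)) S.ν) :
    ∫⁻ ω, ENNReal.ofReal (Real.exp (F ω)) ∂(obsLaw S) ≤
      ENNReal.ofReal (Real.exp (∫ x, ∑ a, S.μb x a * (S.r x a * h x a) ∂S.ν)) := by
  have := S.ν_prob
  have hnn : ∀ x a, ∀ ρ ∈ Set.Icc (0:ℝ) 1, 0 ≤ 1 + ρ * h x a := fun x a ρ hρ =>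
    (Real.exp_pos _).le.trans (hb x a ρ hρ)
  have hnr : ∀ x a, 0 ≤ 1 + S.r x a * h x a := fun x a => hnn x a _ (S.r_mem x a)
  have hin : ∀ x a, ∫⁻ ρ, ENNReal.ofReal (Real.exp (F (x, a, ρ))) ∂(S.rker x a) ≤
      ENNReal.ofReal (1 + S.r x a * h x a) := fun x a => by
    have := S.rker_prob x a
    have hae : ∀ᵐ ρ ∂(S.rker x a), ρ ∈ Set.Icc (0:ℝ) 1 := S.rker_supp x a
    have hi : Integrable (fun ρ : ℝ => 1 + ρ * h x a) (S.rker x a) :=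
      (integrable_const _).add ((S.integrable_id x a).mul_const _)
    calc ∫⁻ ρ, ENNReal.ofReal (Real.exp (F (x, a, ρ))) ∂(S.rker x a)
        ≤ ∫⁻ ρ, ENNReal.ofReal (1 + ρ * h x a) ∂(S.rker x a) :=
          lintegral_mono_ae (hae.mono fun ρ hρ => ENNReal.ofReal_le_ofReal (hb x a ρ hρ))
      _ = ENNReal.ofReal (∫ ρ, (1 + ρ * h x a) ∂(S.rker x a)) :=
          (ofReal_integral_eq_lintegral_ofReal hi (hae.mono fun ρ hρ => hnn x a ρ hρ)).symm
      _ = ENNReal.ofReal (1 + S.r x a * h x a) := by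
          rw [integral_add (integrable_const _) ((S.integrable_id x a).mul_const _),
            integral_mul_const, ← S.r_def]
          simp
  have hsum : ∀ x, ∑ a, S.μb x a * (1 + S.r x a * h x a) =
      1 + ∑ a, S.μb x a * (S.r x a * h x a) := fun x => by
    simp only [mul_add, mul_one, Finset.sum_add_distrib, S.μb_sum_one]
  rw [lintegral_obsLaw S (by fun_prop)]
  calc ∫⁻ x, ∑ a, ENNReal.ofReal (S.μb x a) *
        ∫⁻ ρ, ENNReal.ofReal (Real.exp (F (x, a, ρ))) ∂(S.rker x a) ∂S.ν
      ≤ ∫⁻ x, ENNReal.ofReal (1 + ∑ a, S.μb x a * (S.r x a * h x a)) ∂S.ν := by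
        refine lintegral_mono fun x => ?_
        rw [← hsum, ENNReal.ofReal_sum_of_nonneg fun a _ =>
          mul_nonneg (S.μb_nonneg x a) (hnr x a)]
        refine Finset.sum_le_sum fun a _ => ?_
        rw [ENNReal.ofReal_mul (S.μb_nonneg x a)]
        gcongr
        exact hin x a
    _ = ENNReal.ofReal (∫ x, (1 + ∑ a, S.μb x a * (S.r x a * h x a)) ∂S.ν) := by
        refine (ofReal_integral_eq_lintegral_ofReal ((integrable_const _).add hint)
          (ae_of_all _ fun x => ?_)).symm
        change 0 ≤ 1 + ∑ a, S.μb x a * (S.r x a * h x a)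
        rw [← hsum]
        exact Finset.sum_nonneg fun a _ => mul_nonneg (S.μb_nonneg x a) (hnr x a)
    _ ≤ _ := by
        refine ENNReal.ofReal_le_ofReal ?_
        rw [integral_add (integrable_const _) hint]
        simpa [add_comm] using Real.add_one_le_exp (∫ x, ∑ a, S.μb x a * (S.r x a * h x a) ∂S.ν)

/-- Chernoff bound for the i.i.d. sum of `F` over the dataset. -/
lemma dataLaw_tail (S : CBSetup 𝓧 𝓐) (n : ℕ) {F : 𝓧 × 𝓐 × ℝ → ℝ} (hF : Measurable F) {c : ℝ}
    (hc : ∫⁻ ω, ENNReal.ofReal (Real.exp (F ω)) ∂(obsLaw S) ≤ ENNReal.ofReal (Real.exp c))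
    (L : ℝ) :
    dataLaw S n {D | n * c + L ≤ ∑ t, F (D t)} ≤ ENNReal.ofReal (Real.exp (-L)) := by
  set g : 𝓧 × 𝓐 × ℝ → ENNReal := fun ω => ENNReal.ofReal (Real.exp (F ω)) with hg
  have hgm : Measurable g := by fun_prop
  have hprod : ∫⁻ D, ∏ t : Fin n, g (D t) ∂(dataLaw S n) = ∏ _t : Fin n, ∫⁻ ω, g ω ∂(obsLaw S) := by
    have hind : iIndepFun (fun (t : Fin n) (D : Fin n → 𝓧 × 𝓐 × ℝ) => g (D t)) (dataLaw S n) :=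
      iIndepFun_pi (X := fun _ => g) fun _ => hgm.aemeasurable
    rw [lintegral_prod_eq_prod_lintegral_of_indepFun _ _ hind
      fun t => hgm.comp (measurable_pi_apply t)]
    refine Finset.prod_congr rfl fun t _ => ?_
    exact (measurePreserving_eval (fun _ : Fin n => obsLaw S) t).lintegral_comp hgm
  have hle : ∫⁻ D, ∏ t : Fin n, g (D t) ∂(dataLaw S n) ≤ ENNReal.ofReal (Real.exp (n * c)) := by
    rw [hprod, Finset.prod_const, Finset.card_univ, Fintype.card_fin, Real.exp_nat_mul,
      ENNReal.ofReal_pow (Real.exp_pos _).le]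
    gcongr
  have hset : {D : Fin n → 𝓧 × 𝓐 × ℝ | n * c + L ≤ ∑ t, F (D t)} =
      {D | ENNReal.ofReal (Real.exp (n * c + L)) ≤ ∏ t : Fin n, g (D t)} := by
    ext D
    simp only [Set.mem_ofPred_eq, hg]
    rw [← ENNReal.ofReal_prod_of_nonneg fun t _ => (Real.exp_pos _).le, ← Real.exp_sum,
      ENNReal.ofReal_le_ofReal_iff (Real.exp_pos _).le, Real.exp_le_exp]
  have hmk := (mul_meas_ge_le_lintegral (μ := dataLaw S n)
    (f := fun D => ∏ t : Fin n, g (D t)) (by fun_prop)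
    (ENNReal.ofReal (Real.exp (n * c + L)))).trans hle
  rw [← hset, mul_comm] at hmk
  have h0 : ENNReal.ofReal (Real.exp (n * c + L)) ≠ 0 := by simp [Real.exp_pos]
  refine ((ENNReal.le_div_iff_mul_le (Or.inl h0) (Or.inl ENNReal.ofReal_ne_top)).2 hmk).trans ?_
  rw [← ENNReal.ofReal_div_of_pos (Real.exp_pos _), ← Real.exp_sub]
  simp

/-! ### Pointwise inequalities for the IX estimate -/

/-- Upper-tail bound for the IX estimate, with `p` the policy's probability, `ρ` the reward and
`m` the behavior policy's probability. -/
lemma exp_ix_le {p ρ m γ : ℝ} (hp0 : 0 ≤ p) (hp1 : p ≤ 1) (hρ0 : 0 ≤ ρ) (hρ1 : ρ ≤ 1)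
    (hm : 0 < m) (hγ : 0 < γ) :
    Real.exp (2 * γ * (p * ρ / (m + γ))) ≤ 1 + ρ * (2 * γ * (p / m)) := by
  have hpr : 0 ≤ p * ρ := mul_nonneg hp0 hρ0
  have hpr1 : p * ρ ≤ 1 := mul_le_one₀ hp1 hρ0 hρ1
  have hx : 0 ≤ 2 * γ * (p * ρ / m) := by positivity
  have hlog := Real.le_log_one_add_of_nonneg hx
  have heq : 1 + ρ * (2 * γ * (p / m)) = 1 + 2 * γ * (p * ρ / m) := by ring
  rw [heq, ← Real.le_log_iff_exp_le (by positivity)]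
  refine le_trans ?_ hlog
  have h2 : 2 * (2 * γ * (p * ρ / m)) / (2 * γ * (p * ρ / m) + 2) =
      2 * γ * (p * ρ / (m + γ * (p * ρ))) := by
    field_simp
    ring
  rw [h2]
  have h3 : γ * (p * ρ) ≤ γ := by nlinarith
  gcongr

lemma exp_neg_le_quadratic {x : ℝ} (hx : 0 ≤ x) : Real.exp (-x) ≤ 1 - x + x ^ 2 / 2 := by
  have h := Real.quadratic_le_exp_of_nonneg hx
  have hq : 0 < 1 - x + x ^ 2 / 2 := by nlinarith [sq_nonneg (x - 1)]
  rw [Real.exp_neg, inv_le_iff_one_le_mul₀ (Real.exp_pos _)]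
  nlinarith [mul_le_mul_of_nonneg_left h hq.le, sq_nonneg (x ^ 2)]

/-- Lower-tail bound for the IX estimate. One half of the `4γ²` pays for the variance term and the
other for the IX bias `p ρ / m - p ρ / (m + γ)`. -/
lemma exp_neg_ix_le {p ρ m γ : ℝ} (hp0 : 0 ≤ p) (hp1 : p ≤ 1) (hρ0 : 0 ≤ ρ) (hρ1 : ρ ≤ 1)
    (hm : 0 < m) (hγ : 0 < γ) :
    Real.exp (-(2 * γ) * (p * ρ / (m + γ))) ≤
      1 + ρ * (-(2 * γ) * (p / m) + 4 * γ ^ 2 * (p / m ^ 2)) := by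
  have hpr : 0 ≤ p * ρ := mul_nonneg hp0 hρ0
  have hpr1 : p * ρ ≤ 1 := mul_le_one₀ hp1 hρ0 hρ1
  have hmg : 0 < m + γ := by positivity
  have hq := exp_neg_le_quadratic (x := 2 * γ * (p * ρ / (m + γ))) (by positivity)
  have hbias : p * ρ / m - p * ρ / (m + γ) ≤ γ * (p * ρ / m ^ 2) := by
    have h1 : p * ρ / m - p * ρ / (m + γ) = γ * (p * ρ / (m * (m + γ))) := by
      field_simp
      ring
    rw [h1]
    gcongr
    nlinarith
  have hsq : (p * ρ / (m + γ)) ^ 2 ≤ p * ρ / m ^ 2 := by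
    rw [div_pow]
    gcongr
    · nlinarith
    · linarith
  have e1 := mul_le_mul_of_nonneg_left hbias (by positivity : 0 ≤ 2 * γ)
  have e2 := mul_le_mul_of_nonneg_left hsq (by positivity : 0 ≤ 2 * γ ^ 2)
  rw [neg_mul]
  refine hq.trans (le_of_sub_nonneg ?_)
  have e3 : 1 + ρ * (-(2 * γ) * (p / m) + 4 * γ ^ 2 * (p / m ^ 2)) -
      (1 - 2 * γ * (p * ρ / (m + γ)) + (2 * γ * (p * ρ / (m + γ))) ^ 2 / 2) =
      (2 * γ * (γ * (p * ρ / m ^ 2)) - 2 * γ * (p * ρ / m - p * ρ / (m + γ))) +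
      (2 * γ ^ 2 * (p * ρ / m ^ 2) - 2 * γ ^ 2 * (p * ρ / (m + γ)) ^ 2) := by
    ring
  rw [e3]
  linarith

/-! ### Two-sided concentration of the IX estimator -/

lemma ixTerm_measurable (S : CBSetup 𝓧 𝓐) (γ : ℝ) {π : 𝓧 → 𝓐 → ℝ} (hπ : IsPolicy π) :
    Measurable (ixTerm S γ π) := by
  have hlift : ∀ f : 𝓧 → 𝓐 → ℝ, (∀ a, Measurable fun x => f x a) →
      Measurable fun ω : 𝓧 × 𝓐 × ℝ => f ω.1 ω.2.1 := fun f hf => by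
    have h : Measurable fun q : 𝓧 × 𝓐 => f q.1 q.2 := measurable_from_prod_countable_left hf
    exact h.comp (by fun_prop : Measurable fun ω : 𝓧 × 𝓐 × ℝ => (ω.1, ω.2.1))
  exact ((hlift π hπ.2.2).mul (by fun_prop)).div ((hlift S.μb S.μb_meas).add_const γ)

lemma IsPolicy.le_one {π : 𝓧 → 𝓐 → ℝ} (hπ : IsPolicy π) (x : 𝓧) (a : 𝓐) : π x a ≤ 1 := by
  rw [← hπ.2.1 x]
  exact Finset.single_le_sum (f := fun a => π x a) (fun b _ => hπ.1 x b) (Finset.mem_univ a)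

lemma IsPolicy.integrable_val {π : 𝓧 → 𝓐 → ℝ} (hπ : IsPolicy π) (S : CBSetup 𝓧 𝓐) :
    Integrable (fun x => ∑ a, π x a * S.r x a) S.ν := by
  have := S.ν_prob
  refine integrable_finsetSum _ fun a _ => ?_
  refine Integrable.of_mem_Icc 0 1 ((hπ.2.2 a).mul (S.r_meas a)).aemeasurable
    (ae_of_all _ fun x => ?_)
  obtain ⟨h0, h1⟩ := S.r_mem x a
  exact ⟨mul_nonneg (hπ.1 x a) h0, mul_le_one₀ (hπ.le_one x a) h0 h1⟩

lemma ix_upper_tail (S : CBSetup 𝓧 𝓐) (hμpos : ∀ x a, 0 < S.μb x a) {π : 𝓧 → 𝓐 → ℝ}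
    (hπ : IsPolicy π) {γ : ℝ} (hγ : 0 < γ) (n : ℕ) (L : ℝ) :
    dataLaw S n {D | n * (2 * γ * pval S π) + L ≤ ∑ t, 2 * γ * ixTerm S γ π (D t)} ≤
      ENNReal.ofReal (Real.exp (-L)) := by
  have heq : (fun x => ∑ a, S.μb x a * (S.r x a * (2 * γ * (π x a / S.μb x a)))) =
      fun x => 2 * γ * ∑ a, π x a * S.r x a := by
    ext x
    rw [Finset.mul_sum]
    refine Finset.sum_congr rfl fun a _ => ?_
    have := (hμpos x a).ne'
    field_simp
  have hm := (ixTerm_measurable S γ hπ).const_mul (2 * γ)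
  refine dataLaw_tail S n hm ?_ L
  have h := obs_mgf_le S hm (fun x a => 2 * γ * (π x a / S.μb x a))
    (fun x a ρ hρ => exp_ix_le (hπ.1 x a) (hπ.le_one x a) hρ.1 hρ.2 (hμpos x a) hγ)
    (by rw [heq]; exact (hπ.integrable_val S).const_mul _)
  rwa [heq, integral_const_mul] at h

lemma ix_lower_tail (S : CBSetup 𝓧 𝓐) (hμpos : ∀ x a, 0 < S.μb x a) {π : 𝓧 → 𝓐 → ℝ}
    (hπ : IsPolicy π) (hC : Integrable (fun x => ∑ a, π x a * S.r x a / S.μb x a) S.ν)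
    {γ : ℝ} (hγ : 0 < γ) (n : ℕ) (L : ℝ) :
    dataLaw S n {D | n * (-(2 * γ) * pval S π + 4 * γ ^ 2 * covγ S 0 π) + L ≤
        ∑ t, -(2 * γ) * ixTerm S γ π (D t)} ≤ ENNReal.ofReal (Real.exp (-L)) := by
  have heq : (fun x => ∑ a, S.μb x a *
      (S.r x a * (-(2 * γ) * (π x a / S.μb x a) + 4 * γ ^ 2 * (π x a / S.μb x a ^ 2)))) =
      fun x => -(2 * γ) * ∑ a, π x a * S.r x a +
        4 * γ ^ 2 * ∑ a, π x a * S.r x a / S.μb x a := by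
    ext x
    rw [Finset.mul_sum, Finset.mul_sum, ← Finset.sum_add_distrib]
    refine Finset.sum_congr rfl fun a _ => ?_
    have := (hμpos x a).ne'
    field_simp
  have hi1 := (hπ.integrable_val S).const_mul (-(2 * γ))
  have hi2 := hC.const_mul (4 * γ ^ 2)
  have hm := (ixTerm_measurable S γ hπ).const_mul (-(2 * γ))
  refine dataLaw_tail S n hm ?_ L
  have h := obs_mgf_le S hm
    (fun x a => -(2 * γ) * (π x a / S.μb x a) + 4 * γ ^ 2 * (π x a / S.μb x a ^ 2))
    (fun x a ρ hρ => exp_neg_ix_le (hπ.1 x a) (hπ.le_one x a) hρ.1 hρ.2 (hμpos x a) hγ)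
    (by rw [heq]; exact hi1.add hi2)
  rw [heq, integral_add hi1 hi2, integral_const_mul, integral_const_mul] at h
  simpa only [pval, covγ, add_zero] using h

/-! ### Tuning and the regret bound -/

/-- The value of `2γC + L/(γn)` at its minimizer `γ = √(L/(2Cn))`. -/
lemma tuned_bound {L C N γ : ℝ} (hL : 0 < L) (hC : 0 < C) (hN : 0 < N)
    (hγ : γ = Real.sqrt (L / (2 * C * N))) :
    2 * γ * C + L / (γ * N) = Real.sqrt (8 * C * L / N) := by
  have hγ0 : 0 < γ := by rw [hγ]; positivity
  have hsq : γ ^ 2 = L / (2 * C * N) := by rw [hγ, Real.sq_sqrt (by positivity)]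
  have hLe : L = γ ^ 2 * (2 * C * N) := by rw [hsq]; field_simp
  symm
  rw [Real.sqrt_eq_iff_mul_self_eq (by positivity) (by positivity), hLe]
  field_simp
  ring

/-- Theorem 3, second part: with the policy-dependent IX parameters set to
`γf π = √(log(2|Π|/δ)/(2 C_0(π) n))`, the coverage-scaled PIWO-IX policy satisfies, with
probability at least `1-δ` and simultaneously for every comparator `π' ∈ Pol`,
`v(π') - v(hatπ D) ≤ √(8 C_0(π') log(2|Π|/δ)/n)`. -/
theorem coverage_scaled_piwo_ix_regret_tuned
    (S : CBSetup 𝓧 𝓐) (hμpos : ∀ x a, 0 < S.μb x a)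
    {n : ℕ} (hn : 0 < n) (δ : ℝ) (hδ0 : 0 < δ) (hδ1 : δ < 1)
    (Pol : Finset (𝓧 → 𝓐 → ℝ)) (hne : Pol.Nonempty)
    (hpol : ∀ π ∈ Pol, IsPolicy π)
    (hC0fin : ∀ π ∈ Pol, Integrable (fun x => ∑ a, π x a * S.r x a / S.μb x a) S.ν)
    (hC0pos : ∀ π ∈ Pol, 0 < covγ S 0 π)
    (γf : (𝓧 → 𝓐 → ℝ) → ℝ)
    (hγfdef : ∀ π ∈ Pol,
      γf π = Real.sqrt (Real.log (2 * (Pol.card : ℝ) / δ) / (2 * covγ S 0 π * n)))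
    (hatπ : (Fin n → 𝓧 × 𝓐 × ℝ) → 𝓧 → 𝓐 → ℝ)
    (hmem : ∀ D, hatπ D ∈ Pol)
    (hmax : ∀ D, ∀ π ∈ Pol,
      ixEst S (γf π) π D - Real.log (2 * (Pol.card : ℝ) / δ) / (2 * γf π * n) ≤
        ixEst S (γf (hatπ D)) (hatπ D) D -
          Real.log (2 * (Pol.card : ℝ) / δ) / (2 * γf (hatπ D) * n)) :
    ENNReal.ofReal (1 - δ) ≤
      dataLaw S n {D : Fin n → 𝓧 × 𝓐 × ℝ | ∀ π' ∈ Pol,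
        pval S π' - pval S (hatπ D) ≤
          Real.sqrt (8 * covγ S 0 π' * Real.log (2 * (Pol.card : ℝ) / δ) / n)} := by
  have : IsProbabilityMeasure (dataLaw S n) := by unfold dataLaw; infer_instance
  have hcard : (1:ℝ) ≤ Pol.card := by exact_mod_cast hne.card_pos
  set L := Real.log (2 * (Pol.card : ℝ) / δ) with hLdef
  have harg : 1 < 2 * (Pol.card : ℝ) / δ := by rw [lt_div_iff₀ hδ0]; linarith
  have hL : 0 < L := Real.log_pos harg
  have hN : (0:ℝ) < n := by exact_mod_cast hn
  have hexp : Real.exp (-L) = δ / (2 * Pol.card) := by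
    rw [Real.exp_neg, hLdef, Real.exp_log (by linarith), inv_div]
  have hγpos : ∀ π ∈ Pol, 0 < γf π := fun π hπ => by
    have := hC0pos π hπ
    rw [hγfdef π hπ]
    positivity
  let up : (𝓧 → 𝓐 → ℝ) → Set (Fin n → 𝓧 × 𝓐 × ℝ) := fun π =>
    {D | n * (2 * γf π * pval S π) + L ≤ ∑ t, 2 * γf π * ixTerm S (γf π) π (D t)}
  let lo : (𝓧 → 𝓐 → ℝ) → Set (Fin n → 𝓧 × 𝓐 × ℝ) := fun π =>
    {D | n * (-(2 * γf π) * pval S π + 4 * γf π ^ 2 * covγ S 0 π) + L ≤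
      ∑ t, -(2 * γf π) * ixTerm S (γf π) π (D t)}
  let bad : Set (Fin n → 𝓧 × 𝓐 × ℝ) := ⋃ π ∈ Pol, (up π ∪ lo π)
  have hbad : dataLaw S n bad ≤ ENNReal.ofReal δ := by
    refine (measure_biUnion_finset_le Pol _).trans ?_
    calc ∑ π ∈ Pol, dataLaw S n (up π ∪ lo π)
        ≤ ∑ _π ∈ Pol, ENNReal.ofReal (δ / Pol.card) := by
          refine Finset.sum_le_sum fun π hπ => (measure_union_le _ _).trans ?_
          refine (add_le_add (ix_upper_tail S hμpos (hpol π hπ) (hγpos π hπ) n L)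
            (ix_lower_tail S hμpos (hpol π hπ) (hC0fin π hπ) (hγpos π hπ) n L)).trans ?_
          rw [← ENNReal.ofReal_add (Real.exp_pos _).le (Real.exp_pos _).le, hexp]
          refine ENNReal.ofReal_le_ofReal (le_of_eq ?_)
          field_simp
          norm_num
      _ = ENNReal.ofReal δ := by
          rw [Finset.sum_const, nsmul_eq_mul, ← ENNReal.ofReal_natCast,
            ← ENNReal.ofReal_mul (by positivity)]
          congr 1
          field_simp
  have hmeas : MeasurableSet bad := by
    refine Finset.measurableSet_biUnion _ fun π hπ => ?_
    have hm := ixTerm_measurable S (γf π) (hpol π hπ)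
    exact (measurableSet_le measurable_const (by fun_prop)).union
      (measurableSet_le measurable_const (by fun_prop))
  have hgood : ENNReal.ofReal (1 - δ) ≤ dataLaw S n badᶜ := by
    rw [prob_compl_eq_one_sub hmeas, ENNReal.ofReal_sub _ hδ0.le, ENNReal.ofReal_one]
    exact tsub_le_tsub_left hbad 1
  refine hgood.trans (measure_mono fun D hD π' hπ' => ?_)
  have hnot : ∀ π ∈ Pol, D ∉ up π ∧ D ∉ lo π := fun π hπ => by
    constructor <;> intro h <;> apply hD <;> refine Set.mem_biUnion hπ ?_
    exacts [Or.inl h, Or.inr h]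
  have hsum : ∀ π, ∑ t, ixTerm S (γf π) π (D t) = n * ixEst S (γf π) π D := fun π => by
    rw [ixEst]
    field_simp
  have hup : ∀ π ∈ Pol, ixEst S (γf π) π D - L / (2 * γf π * n) ≤ pval S π := fun π hπ => by
    have h : ∑ t, 2 * γf π * ixTerm S (γf π) π (D t) < n * (2 * γf π * pval S π) + L :=
      not_le.1 (hnot π hπ).1
    rw [← Finset.mul_sum, hsum] at h
    have hg := hγpos π hπ
    have hd : 0 < 2 * γf π * n := by positivity
    rw [sub_le_iff_le_add, ← sub_le_iff_le_add', le_div_iff₀ hd]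
    linarith
  have hlo : pval S π' - ixEst S (γf π') π' D ≤ 2 * γf π' * covγ S 0 π' + L / (2 * γf π' * n) := by
    have h : ∑ t, -(2 * γf π') * ixTerm S (γf π') π' (D t) <
        n * (-(2 * γf π') * pval S π' + 4 * γf π' ^ 2 * covγ S 0 π') + L :=
      not_le.1 (hnot π' hπ').2
    rw [← Finset.mul_sum, hsum] at h
    have hg := hγpos π' hπ'
    have hd : 0 < 2 * γf π' * n := by positivity
    rw [← sub_le_iff_le_add', le_div_iff₀ hd]
    linarith
  have h1 := hup _ (hmem D)
  have h2 := hmax D π' hπ'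
  rw [← tuned_bound hL (hC0pos π' hπ') hN (hγfdef π' hπ')]
  have h3 : L / (γf π' * n) = L / (2 * γf π' * n) + L / (2 * γf π' * n) := by
    have := hγpos π' hπ'
    field_simp
    norm_num
  linarith
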